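/- Let X be a power homogeneous compactum and κ an infinite cardinal. If every non-empty closed subset F ⊆ X contains a point x with πχ(x,F) ≤ κ, then πχ(X) ≤ κ. -/

import Mathlib

open Cardinal Set TopologicalSpace

universe u

/-- The tightness `t(X)`: the least infinite cardinal `κ` such that whenever
`x ∈ closure A` there is `B ⊆ A` with `#B ≤ κ` and `x ∈ closure B`. -/
noncomputable def tightness (X : Type u) [TopologicalSpace X] : Cardinal.{u} :=
  sInf {κ : Cardinal.{u} | ℵ₀ ≤ κ ∧ ∀ (A : Set X) (x : X), x ∈ closure A →
    ∃ B ⊆ A, #B ≤ κ ∧ x ∈ closure B}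

/-- The `κ`-closure of a set `A`. -/
noncomputable def clk {X : Type u} [TopologicalSpace X] (κ : Cardinal.{u}) (A : Set X) : Set X :=
  ⋃ (B : Set X) (_ : B ⊆ A ∧ #B ≤ κ), closure B

/-- A cover `𝒞` witnessing that `wt X ≤ κ`. -/
noncomputable def IsWtWitness {X : Type u} [TopologicalSpace X] (κ : Cardinal.{u}) (𝒞 : Set (Set X)) : Prop :=
  ⋃₀ 𝒞 = Set.univ ∧ #𝒞 ≤ 2 ^ κ ∧ ∀ C ∈ 𝒞, tightness ↥C ≤ κ ∧ clk (2 ^ κ) C = Set.univ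

/-- The weak tightness `wt(X)`. -/
noncomputable def wt (X : Type u) [TopologicalSpace X] : Cardinal.{u} :=
  sInf {κ : Cardinal.{u} | ℵ₀ ≤ κ ∧ ∃ 𝒞 : Set (Set X), IsWtWitness κ 𝒞}

/-- The Lindelöf number `L(X)`. -/
noncomputable def LindelofNumber (X : Type u) [TopologicalSpace X] : Cardinal.{u} :=
  sInf {κ : Cardinal.{u} | ℵ₀ ≤ κ ∧ ∀ 𝒰 : Set (Set X), (∀ U ∈ 𝒰, IsOpen U) →
    ⋃₀ 𝒰 = Set.univ → ∃ 𝒱 ⊆ 𝒰, #𝒱 ≤ κ ∧ ⋃₀ 𝒱 = Set.univ}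

/-- The pseudocharacter `ψ(X)`. -/
noncomputable def psi (X : Type u) [TopologicalSpace X] : Cardinal.{u} :=
  sInf {κ : Cardinal.{u} | ℵ₀ ≤ κ ∧ ∀ x : X, ∃ 𝒰 : Set (Set X),
    #𝒰 ≤ κ ∧ (∀ U ∈ 𝒰, IsOpen U ∧ x ∈ U) ∧ ⋂₀ 𝒰 = {x}}

/-- The closed pseudocharacter `ψ_c(X)`. -/
noncomputable def psic (X : Type u) [TopologicalSpace X] : Cardinal.{u} :=
  sInf {κ : Cardinal.{u} | ℵ₀ ≤ κ ∧ ∀ x : X, ∃ 𝒰 : Set (Set X),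
    #𝒰 ≤ κ ∧ (∀ U ∈ 𝒰, IsOpen U ∧ x ∈ U) ∧ (⋂ U ∈ 𝒰, closure U) = {x}}

/-- `A` is `𝒞`-saturated: `A ∩ C` is dense in `A` for every `C ∈ 𝒞`. -/
noncomputable def Saturated {X : Type u} [TopologicalSpace X] (𝒞 : Set (Set X)) (A : Set X) : Prop :=
  ∀ C ∈ 𝒞, A ⊆ closure (A ∩ C)

/-- The π-character `πχ(x, X)` of a point: least cardinality of a local π-base at `x`. -/
noncomputable def piCharPt {X : Type u} [TopologicalSpace X] (x : X) : Cardinal.{u} :=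
  sInf {κ : Cardinal.{u} | ∃ ℬ : Set (Set X), #ℬ ≤ κ ∧
    (∀ B ∈ ℬ, IsOpen B ∧ B.Nonempty) ∧ ∀ U : Set X, IsOpen U → x ∈ U → ∃ B ∈ ℬ, B ⊆ U}

/-- The π-character `πχ(X)`. -/
noncomputable def piChar (X : Type u) [TopologicalSpace X] : Cardinal.{u} :=
  ⨆ x : X, piCharPt x

/-- The character `χ(x, X)` of a point: least cardinality of a local base at `x`. -/
noncomputable def charPt {X : Type u} [TopologicalSpace X] (x : X) : Cardinal.{u} :=
  sInf {κ : Cardinal.{u} | ∃ ℬ : Set (Set X), #ℬ ≤ κ ∧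
    (∀ B ∈ ℬ, IsOpen B ∧ x ∈ B) ∧ ∀ U : Set X, IsOpen U → x ∈ U → ∃ B ∈ ℬ, B ⊆ U}

/-- The character `χ(X)`. -/
noncomputable def character (X : Type u) [TopologicalSpace X] : Cardinal.{u} :=
  ⨆ x : X, charPt x

/-- The density `d(X)`: least cardinality of a dense subset. -/
noncomputable def density (X : Type u) [TopologicalSpace X] : Cardinal.{u} :=
  sInf {κ : Cardinal.{u} | ∃ D : Set X, Dense D ∧ #D ≤ κ}

/-- A space is homogeneous if its homeomorphism group acts transitively. -/
noncomputable def Homogeneous (X : Type u) [TopologicalSpace X] : Prop :=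
  ∀ x y : X, ∃ h : X ≃ₜ X, h x = y

/-- A space is power homogeneous if some (nonempty) power of it is homogeneous. -/
noncomputable def PowerHomogeneous (X : Type u) [TopologicalSpace X] : Prop :=
  ∃ I : Type u, Nonempty I ∧ Homogeneous (I → X)

/-- A `G^c_κ`-set: `G = ⋂𝒰 = ⋂_{U ∈ 𝒰} closure U` for a family `𝒰` of `≤ κ` open sets. -/
noncomputable def GcSet {X : Type u} [TopologicalSpace X] (κ : Cardinal.{u}) (G : Set X) : Prop :=
  ∃ 𝒰 : Set (Set X), #𝒰 ≤ κ ∧ (∀ U ∈ 𝒰, IsOpen U) ∧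
    G = ⋂₀ 𝒰 ∧ G = ⋂ U ∈ 𝒰, closure U

/-- A subset is subseparable if it is contained in the closure of a countable set. -/
noncomputable def Subseparable {X : Type u} [TopologicalSpace X] (A : Set X) : Prop :=
  ∃ c : Set X, c.Countable ∧ A ⊆ closure c

/-!
Call a point *small* if its π-character is at most `κ`. A limit of at most `κ` small points is
small.

*Small points are dense.* In a locally compact regular space, every non-empty open set contains a
non-empty compact closed `F` whose neighbourhood filter is countably generated, and
`πχ(x, X) ≤ πχ(x, F) · χ(F, X)` for `x ∈ F`.

*Open continuous maps on products preserve smallness.* Let `f : ∏ Xᵢ → Y` be open and continuous,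
with `Y` regular and the small points of `Y` dense, and let all `xᵢ` be small. For each member
`V` of a local π-base at `x` in a finite subproduct, pick a small `d ∈ f(V)`; at most `κ`
coordinates decide how `V` meets the preimages of the neighbourhoods of `d`. Close off to a set
`T` of at most `κ` coordinates. Given a closed neighbourhood `P` of `f x` and a basic box about
`x` in `f⁻¹(P)` with finite support `E`, choose `V` inside this box on the coordinates `E ∩ T`.
Then its `d` lies in `P`: otherwise some cylinder over a subset of `T` meets `V` and is mapped
into `Pᶜ`, but replacing the remaining coordinates of a point of `V` in this cylinder by those of
`x` gives a point of the cylinder that `f` maps into `P`. So `f x` is a limit of at most `κ`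
small points `d`.

A homeomorphism of a power of `X` that moves one diagonal point to another, followed by a coordinate
projection, is such an `f`.
-/

section Cardinality

variable {α ι : Type u} {κ : Cardinal.{u}}

theorem mk_iUnion_le_of_le (hκ : ℵ₀ ≤ κ) {s : ι → Set α} (hι : #ι ≤ κ) (hs : ∀ i, #(s i) ≤ κ) :
    #(⋃ i, s i) ≤ κ :=
  (mk_iUnion_le s).trans (mul_le_of_le hκ hι (ciSup_le' hs))

theorem mk_iUnion_nat_le_of_le (hκ : ℵ₀ ≤ κ) {s : ℕ → Set α} (hs : ∀ n, #(s n) ≤ κ) :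
    #(⋃ n, s n) ≤ κ := by
  rw [← Equiv.ulift.{u}.surjective.iUnion_comp s]
  exact mk_iUnion_le_of_le hκ (by simpa using hκ) fun n => hs n.down

theorem mk_biUnion_le_of_le (hκ : ℵ₀ ≤ κ) {t : Set ι} {s : ι → Set α} (ht : #t ≤ κ)
    (hs : ∀ i ∈ t, #(s i) ≤ κ) : #(⋃ i ∈ t, s i) ≤ κ := by
  rw [biUnion_eq_iUnion]
  exact mk_iUnion_le_of_le hκ ht fun i => hs i i.2

theorem mk_coe_finset_le (hκ : ℵ₀ ≤ κ) (s : Finset α) : #(s : Set α) ≤ κ :=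
  s.finite_toSet.lt_aleph0.le.trans hκ

theorem mk_pi_le_of_le [Finite ι] {β : ι → Type u} (hκ : ℵ₀ ≤ κ) (hβ : ∀ i, #(β i) ≤ κ) :
    #(∀ i, β i) ≤ κ := by
  obtain ⟨n, hn⟩ := lt_aleph0.1 (lt_aleph0_of_finite ι)
  calc #(∀ i, β i) = prod fun i => #(β i) := mk_pi β
    _ ≤ prod fun _ : ι => κ := prod_le_prod _ _ hβ
    _ = κ ^ n := by rw [prod_const', hn, power_natCast]
    _ ≤ κ := power_nat_le hκ

theorem mk_setOf_finset_subset_le (hκ : ℵ₀ ≤ κ) {s : Set α} (hs : #s ≤ κ) :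
    #{R : Finset α | ↑R ⊆ s} ≤ κ := by
  classical
  have hrange : {R : Finset α | ↑R ⊆ s} ⊆
      range (Finset.map (Function.Embedding.subtype (· ∈ s))) := fun R hR =>
    ⟨R.subtype (· ∈ s), Finset.subtype_map_of_mem fun _ hi => hR hi⟩
  refine (mk_le_mk_of_subset hrange).trans (mk_range_le.trans ?_)
  cases finite_or_infinite s
  · exact (lt_aleph0_of_finite _).le.trans hκ
  · exact (mk_finset_of_infinite s).trans_le hs

theorem exists_mk_le_forall_finset_subset (hκ : ℵ₀ ≤ κ) (A : Finset α → Set α)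
    (hA : ∀ R, #(A R) ≤ κ) :
    ∃ T : Set α, #T ≤ κ ∧ ∀ R : Finset α, ↑R ⊆ T → A R ⊆ T := by
  let step (T : Set α) : Set α := T ∪ ⋃ R ∈ {R : Finset α | ↑R ⊆ T}, A R
  let T (n : ℕ) : Set α := step^[n] ∅
  have T_succ (n : ℕ) : T (n + 1) = step (T n) := Function.iterate_succ_apply' _ _ _
  have T_mono : Monotone T := monotone_nat_of_le_succ fun n => by
    rw [T_succ]
    exact subset_union_left
  have mk_T (n : ℕ) : #(T n) ≤ κ := by
    induction n with
    | zero => simp [T]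
    | succ n ih =>
      rw [T_succ]
      exact (mk_union_le _ _).trans <| add_le_of_le hκ ih <|
        mk_biUnion_le_of_le hκ (mk_setOf_finset_subset_le hκ ih) fun R _ => hA R
  refine ⟨⋃ n, T n, mk_iUnion_nat_le_of_le hκ mk_T, fun R hR => ?_⟩
  obtain ⟨n, hn⟩ := T_mono.directed_le.exists_mem_subset_of_finset_subset_biUnion hR
  calc A R ⊆ step (T n) := subset_union_of_subset_right (subset_biUnion_of_mem hn) _
    _ = T (n + 1) := (T_succ n).symm
    _ ⊆ ⋃ n, T n := subset_iUnion T (n + 1)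

end Cardinality

section LocalPiBase

variable {X : Type u} [TopologicalSpace X] {κ : Cardinal.{u}}

/-- A local π-base at `x`: a family of non-empty open sets, not required to contain `x`, such that
every neighbourhood of `x` contains a member. These are the families over which `piCharPt x`
minimizes the cardinality. -/
structure IsLocalPiBase (ℬ : Set (Set X)) (x : X) : Prop where
  isOpen : ∀ B ∈ ℬ, IsOpen B
  nonempty : ∀ B ∈ ℬ, B.Nonempty
  exists_subset : ∀ U, IsOpen U → x ∈ U → ∃ B ∈ ℬ, B ⊆ U

theorem IsLocalPiBase.piCharPt_le {ℬ : Set (Set X)} {x : X} (hℬx : IsLocalPiBase ℬ x)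
    (hℬ : #ℬ ≤ κ) : piCharPt x ≤ κ :=
  csInf_le' ⟨ℬ, hℬ, fun B hB => ⟨hℬx.isOpen B hB, hℬx.nonempty B hB⟩, hℬx.exists_subset⟩

theorem exists_isLocalPiBase {x : X} (hx : piCharPt x ≤ κ) :
    ∃ ℬ : Set (Set X), #ℬ ≤ κ ∧ IsLocalPiBase ℬ x := by
  obtain ⟨ℬ, hℬ, hℬo, hℬx⟩ := csInf_mem (s := {κ : Cardinal.{u} | ∃ ℬ : Set (Set X), #ℬ ≤ κ ∧
      (∀ B ∈ ℬ, IsOpen B ∧ B.Nonempty) ∧ ∀ U : Set X, IsOpen U → x ∈ U → ∃ B ∈ ℬ, B ⊆ U})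
    ⟨_, {B | IsOpen B ∧ B.Nonempty}, le_rfl, fun _ hB => hB,
      fun U hU hxU => ⟨U, ⟨hU, x, hxU⟩, Subset.rfl⟩⟩
  exact ⟨ℬ, hℬ.trans hx, fun B hB => (hℬo B hB).1, fun B hB => (hℬo B hB).2, hℬx⟩

theorem piCharPt_le_of_mem_closure (hκ : ℵ₀ ≤ κ) {S : Set X} (hS : #S ≤ κ)
    (hSκ : ∀ s ∈ S, piCharPt s ≤ κ) {x : X} (hx : x ∈ closure S) : piCharPt x ≤ κ := by
  choose! ℬ hℬ hℬS using fun s hs => exists_isLocalPiBase (hSκ s hs)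
  refine IsLocalPiBase.piCharPt_le (ℬ := ⋃ s ∈ S, ℬ s) ⟨?_, ?_, fun U hU hxU => ?_⟩
    (mk_biUnion_le_of_le hκ hS hℬ)
  · intro B hB
    obtain ⟨s, hs, hBs⟩ := mem_iUnion₂.1 hB
    exact (hℬS s hs).isOpen B hBs
  · intro B hB
    obtain ⟨s, hs, hBs⟩ := mem_iUnion₂.1 hB
    exact (hℬS s hs).nonempty B hBs
  · obtain ⟨s, hsU, hs⟩ := mem_closure_iff.1 hx U hU hxU
    obtain ⟨B, hB, hBU⟩ := (hℬS s hs).exists_subset U hU hsU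
    exact ⟨B, mem_biUnion hs hB, hBU⟩

theorem piCharPt_pi_le {ι : Type u} [Finite ι] {X : ι → Type u} [∀ i, TopologicalSpace (X i)]
    (hκ : ℵ₀ ≤ κ) {x : ∀ i, X i} (hx : ∀ i, piCharPt (x i) ≤ κ) : piCharPt x ≤ κ := by
  choose ℬ hℬ hℬx using fun i => exists_isLocalPiBase (hx i)
  let box (b : ∀ i, ℬ i) : Set (∀ i, X i) := univ.pi fun i => b i
  refine IsLocalPiBase.piCharPt_le (ℬ := range box) ⟨?_, ?_, fun U hU hxU => ?_⟩
    (mk_range_le.trans (mk_pi_le_of_le hκ hℬ))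
  · rintro _ ⟨b, rfl⟩
    exact isOpen_set_pi finite_univ fun i _ => (hℬx i).isOpen _ (b i).2
  · rintro _ ⟨b, rfl⟩
    exact univ_pi_nonempty_iff.2 fun i => (hℬx i).nonempty _ (b i).2
  · obtain ⟨u, hu, huU⟩ := isOpen_pi_iff'.1 hU x hxU
    choose B hB hBu using fun i => (hℬx i).exists_subset (u i) (hu i).1 (hu i).2
    exact ⟨box fun i => ⟨B i, hB i⟩, mem_range_self _, (pi_mono fun i _ => hBu i).trans huU⟩

end LocalPiBase

section CountableCharacter

open Filter Topology

variable {X : Type u} [TopologicalSpace X] [RegularSpace X] {κ : Cardinal.{u}}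

theorem piCharPt_coe_le (hκ : ℵ₀ ≤ κ) {F : Set X} [(𝓝ˢ F).IsCountablyGenerated] {x : F}
    (hx : piCharPt x ≤ κ) : piCharPt (x : X) ≤ κ := by
  obtain ⟨ℬ, hℬ, hℬx⟩ := exists_isLocalPiBase hx
  obtain ⟨u, hu⟩ := (𝓝ˢ F).exists_antitone_basis
  have shrink : ∀ B ∈ ℬ, ∃ O : Set X, IsOpen O ∧ (O ∩ F).Nonempty ∧
      closure O ∩ F ⊆ Subtype.val '' B := by
    intro B hB
    obtain ⟨G, hG, rfl⟩ := isOpen_induced_iff.1 (hℬx.isOpen B hB)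
    obtain ⟨b, hbG⟩ := hℬx.nonempty _ hB
    obtain ⟨C, hC, hCc, hCG⟩ := exists_mem_nhds_isClosed_subset (hG.mem_nhds hbG)
    refine ⟨interior C, isOpen_interior, ⟨b, mem_interior_iff_mem_nhds.2 hC, b.2⟩, ?_⟩
    rw [Subtype.image_preimage_coe, inter_comm F]
    exact inter_subset_inter_left _ ((closure_minimal interior_subset hCc).trans hCG)
  choose! O hO hOF hOB using shrink
  refine IsLocalPiBase.piCharPt_le
    (ℬ := ⋃ n, (fun B => O B ∩ interior (u n)) '' ℬ) ⟨?_, ?_, ?_⟩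
    (mk_iUnion_nat_le_of_le hκ fun n => mk_image_le.trans hℬ)
  · intro V hV
    obtain ⟨n, B, hB, rfl⟩ := mem_iUnion.1 hV
    exact (hO B hB).inter isOpen_interior
  · intro V hV
    obtain ⟨n, B, hB, rfl⟩ := mem_iUnion.1 hV
    exact (hOF B hB).mono
      (inter_subset_inter_right _ (subset_interior_iff_mem_nhdsSet.2 (hu.mem n)))
  · intro W hW hxW
    obtain ⟨B, hB, hBW⟩ := hℬx.exists_subset _ (hW.preimage continuous_subtype_val) hxW
    have hF : F ⊆ W ∪ (closure (O B))ᶜ := fun z hzF => or_iff_not_imp_right.2 fun hz =>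
      image_subset_iff.2 hBW (hOB B hB ⟨not_not.1 hz, hzF⟩)
    obtain ⟨n, hn⟩ := hu.mem_iff.1
      ((hW.union isClosed_closure.isOpen_compl).mem_nhdsSet.2 hF)
    refine ⟨_, mem_iUnion.2 ⟨n, B, hB, rfl⟩, fun z hz => ?_⟩
    exact (hn (interior_subset hz.2)).resolve_right fun h => h (subset_closure hz.1)

theorem nhdsSet_preimage_singleton_of_hasCompactSupport {X Y : Type*} [TopologicalSpace X]
    [TopologicalSpace Y] [T2Space Y] [Zero Y] {f : X → Y} (hf : Continuous f)
    (hfc : HasCompactSupport f) {y : Y} (hy : y ≠ 0) : 𝓝ˢ (f ⁻¹' {y}) = comap f (𝓝 y) := by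
  refine le_antisymm ?_ fun W hW => ?_
  · rw [← nhdsSet_singleton]
    exact tendsto_iff_comap.1 (hf.tendsto_nhdsSet (mapsTo_preimage _ _))
  · obtain ⟨U, hU, hyU, hUW⟩ := mem_nhdsSet_iff_exists.1 hW
    have hK : IsCompact (f '' (tsupport f \ U)) := (hfc.diff hU).image hf
    refine mem_comap.2 ⟨(f '' (tsupport f \ U) ∪ {0})ᶜ,
      (hK.isClosed.union isClosed_singleton).isOpen_compl.mem_nhds ?_, fun z hz => hUW ?_⟩
    · rintro (⟨z, hz, hzy⟩ | hy0)
      exacts [hz.2 (hyU hzy), hy hy0]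
    · by_contra hzU
      exact hz (or_iff_not_imp_right.2 fun hz0 => ⟨z, ⟨subset_tsupport f hz0, hzU⟩, rfl⟩)

theorem exists_isCompact_isClosed_subset_isCountablyGenerated_nhdsSet [LocallyCompactSpace X]
    {U : Set X} (hU : IsOpen U) (hUne : U.Nonempty) :
    ∃ F ⊆ U, IsCompact F ∧ IsClosed F ∧ F.Nonempty ∧ (𝓝ˢ F).IsCountablyGenerated := by
  obtain ⟨p, hp⟩ := hUne
  obtain ⟨f, hfp, hfU, hfc, -⟩ := exists_continuous_one_zero_of_isCompact isCompact_singleton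
    hU.isClosed_compl (disjoint_singleton_left.2 (not_not.2 hp))
  have hF : IsClosed (f ⁻¹' {1}) := isClosed_singleton.preimage f.continuous
  have hFs : f ⁻¹' {1} ⊆ tsupport f := fun z (hz : f z = 1) =>
    subset_tsupport f (by simp [hz])
  have hFU : f ⁻¹' {1} ⊆ U := fun z hz => by
    by_contra hzU
    exact zero_ne_one ((hfU hzU).symm.trans hz)
  refine ⟨f ⁻¹' {1}, hFU, hfc.of_isClosed_subset hF hFs, hF, ⟨p, hfp rfl⟩, ?_⟩
  rw [nhdsSet_preimage_singleton_of_hasCompactSupport f.continuous hfc one_ne_zero]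
  infer_instance

theorem dense_setOf_piCharPt_le [LocallyCompactSpace X] (hκ : ℵ₀ ≤ κ)
    (h : ∀ F : Set X, IsCompact F → IsClosed F → F.Nonempty → ∃ x : F, piCharPt x ≤ κ) :
    Dense {x : X | piCharPt x ≤ κ} := by
  refine dense_iff_inter_open.2 fun U hU hUne => ?_
  obtain ⟨F, hFU, hFk, hFc, hFne, _⟩ :=
    exists_isCompact_isClosed_subset_isCountablyGenerated_nhdsSet hU hUne
  obtain ⟨x, hx⟩ := h F hFk hFc hFne
  exact ⟨x, hFU x.2, piCharPt_coe_le hκ hx⟩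

end CountableCharacter

section OpenMap

variable {I : Type u} {X : I → Type u} [∀ i, TopologicalSpace (X i)]
  {Y : Type u} [TopologicalSpace Y] {κ : Cardinal.{u}}

theorem exists_finset_cylinder_subset {U : Set (∀ i, X i)} (hU : IsOpen U) {z : ∀ i, X i}
    (hz : z ∈ U) : ∃ A : Finset I, ∀ w, (∀ i ∈ A, w i = z i) → w ∈ U := by
  obtain ⟨A, u, hu, huU⟩ := isOpen_pi_iff.1 hU z hz
  exact ⟨A, fun w hw => huU fun i hi => (hw i hi).symm ▸ (hu i hi).2⟩

theorem exists_mk_le_cylinder_mapsTo (hκ : ℵ₀ ≤ κ) (hD : Dense {y : Y | piCharPt y ≤ κ})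
    {f : (∀ i, X i) → Y} (hf : Continuous f) (hfo : IsOpenMap f) {V : Set (∀ i, X i)}
    (hV : IsOpen V) (hVne : V.Nonempty) :
    ∃ (d : Y) (A : Set I), piCharPt d ≤ κ ∧ #A ≤ κ ∧
      ∀ O, IsOpen O → d ∈ O → ∃ z ∈ V, ∀ w, (∀ i ∈ A, w i = z i) → f w ∈ O := by
  obtain ⟨d, hdV, hd⟩ := hD.inter_open_nonempty _ (hfo V hV) (hVne.image f)
  obtain ⟨𝒩, h𝒩, h𝒩d⟩ := exists_isLocalPiBase hd
  have : Nonempty (∀ i, X i) := ⟨hVne.some⟩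
  have hcyl : ∀ N ∈ 𝒩, N ⊆ f '' V →
      ∃ z ∈ V, ∃ A : Finset I, ∀ w, (∀ i ∈ A, w i = z i) → f w ∈ N := by
    intro N hN hNV
    obtain ⟨_, hyN⟩ := h𝒩d.nonempty N hN
    obtain ⟨z, hzV, rfl⟩ := hNV hyN
    exact ⟨z, hzV, exists_finset_cylinder_subset ((h𝒩d.isOpen N hN).preimage hf) hyN⟩
  choose! z hzV A hA using hcyl
  refine ⟨d, ⋃ N ∈ 𝒩, A N, hd, mk_biUnion_le_of_le hκ h𝒩 fun N _ => mk_coe_finset_le hκ _,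
    fun O hO hdO => ?_⟩
  obtain ⟨N, hN, hNO⟩ := h𝒩d.exists_subset _ (hO.inter (hfo V hV)) ⟨hdO, hdV⟩
  have hNV : N ⊆ f '' V := fun _ hy => (hNO hy).2
  exact ⟨z N, hzV N hN hNV, fun w hw => (hNO <| hA N hN hNV w <|
    fun i hi => hw i (mem_biUnion hN hi)).1⟩

theorem exists_mk_le_mem_closure_of_isOpenMap_pi [RegularSpace Y] (hκ : ℵ₀ ≤ κ)
    (hD : Dense {y : Y | piCharPt y ≤ κ}) {f : (∀ i, X i) → Y} (hf : Continuous f)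
    (hfo : IsOpenMap f) {x : ∀ i, X i} (hx : ∀ i, piCharPt (x i) ≤ κ) :
    ∃ S : Set Y, #S ≤ κ ∧ (∀ s ∈ S, piCharPt s ≤ κ) ∧ f x ∈ closure S := by
  classical
  have (i : I) : Nonempty (X i) := ⟨x i⟩
  choose 𝒢 h𝒢 h𝒢x using fun R : Finset I =>
    exists_isLocalPiBase (piCharPt_pi_le hκ (x := R.restrict x) fun i => hx i)
  choose d A hd hA hdA using fun (R : Finset I) (G : 𝒢 R) =>
    exists_mk_le_cylinder_mapsTo hκ hD hf hfo
      (((h𝒢x R).isOpen G G.2).preimage R.continuous_restrict)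
      (((h𝒢x R).nonempty G G.2).preimage (Subtype.surjective_restrict (· ∈ R)))
  obtain ⟨T, hT, hAT⟩ := exists_mk_le_forall_finset_subset hκ (fun R => ⋃ G, A R G)
    fun R => mk_iUnion_le_of_le hκ (h𝒢 R) (hA R)
  refine ⟨⋃ R ∈ {R : Finset I | ↑R ⊆ T}, range (d R),
    mk_biUnion_le_of_le hκ (mk_setOf_finset_subset_le hκ hT) fun R _ => mk_range_le.trans (h𝒢 R),
    fun s hs => ?_, mem_closure_iff_nhds.2 fun W hW => ?_⟩
  · obtain ⟨R, -, G, rfl⟩ := mem_iUnion₂.1 hs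
    exact hd R G
  obtain ⟨P, hP, hPc, hPW⟩ := exists_mem_nhds_isClosed_subset hW
  obtain ⟨E, u, hu, huP⟩ := isOpen_pi_iff.1 (isOpen_interior.preimage hf) x
    (mem_interior_iff_mem_nhds.2 hP)
  let R : Finset I := E.filter (· ∈ T)
  have hRT : ↑R ⊆ T := fun i hi => (Finset.mem_filter.1 hi).2
  have hRE : ∀ i ∈ R, i ∈ E := fun i hi => (Finset.mem_filter.1 hi).1
  obtain ⟨G, hG, hGu⟩ := (h𝒢x R).exists_subset (univ.pi fun i : R => u i)
    (isOpen_set_pi finite_univ fun i _ => (hu i (hRE i i.2)).1) fun i _ => (hu i (hRE i i.2)).2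
  refine ⟨d R ⟨G, hG⟩, hPW ?_, mem_biUnion hRT (mem_range_self _)⟩
  by_contra hdP
  obtain ⟨z, hzG, hz⟩ := hdA R ⟨G, hG⟩ Pᶜ hPc.isOpen_compl hdP
  refine hz ((A R ⟨G, hG⟩).piecewise z x) (fun i => piecewise_eq_of_mem _ _ _)
    (interior_subset (huP fun i hi => ?_))
  by_cases hiA : i ∈ A R ⟨G, hG⟩
  · have hiR : i ∈ R := Finset.mem_filter.2 ⟨hi, hAT R hRT (mem_iUnion.2 ⟨_, hiA⟩)⟩
    rw [piecewise_eq_of_mem _ _ _ hiA]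
    exact hGu hzG ⟨i, hiR⟩ (mem_univ _)
  · rw [piecewise_eq_of_notMem _ _ _ hiA]
    exact (hu i hi).2

theorem piCharPt_le_of_isOpenMap_pi [RegularSpace Y] (hκ : ℵ₀ ≤ κ)
    (hD : Dense {y : Y | piCharPt y ≤ κ}) {f : (∀ i, X i) → Y} (hf : Continuous f)
    (hfo : IsOpenMap f) {x : ∀ i, X i} (hx : ∀ i, piCharPt (x i) ≤ κ) : piCharPt (f x) ≤ κ := by
  obtain ⟨S, hS, hSκ, hxS⟩ := exists_mk_le_mem_closure_of_isOpenMap_pi hκ hD hf hfo hx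
  exact piCharPt_le_of_mem_closure hκ hS hSκ hxS

end OpenMap

theorem PowerHomogeneous.piChar_le_of_dense {X : Type u} [TopologicalSpace X] [RegularSpace X]
    {κ : Cardinal.{u}} (hph : PowerHomogeneous X) (hκ : ℵ₀ ≤ κ)
    (hD : Dense {x : X | piCharPt x ≤ κ}) : piChar X ≤ κ := by
  refine ciSup_le' fun y => ?_
  obtain ⟨I, ⟨i₀⟩, hhom⟩ := hph
  have : Nonempty X := ⟨y⟩
  obtain ⟨x, hx⟩ := hD.nonempty
  obtain ⟨g, hg⟩ := hhom (fun _ => x) (fun _ => y)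
  have hgy : g (fun _ => x) i₀ = y := congrFun hg i₀
  rw [← hgy]
  exact piCharPt_le_of_isOpenMap_pi (f := fun z => g z i₀) hκ hD
    ((continuous_apply i₀).comp g.continuous) ((isOpenMap_eval i₀).comp g.isOpenMap) fun _ => hx

theorem stmt13_general {X : Type u} [TopologicalSpace X] [LocallyCompactSpace X] [RegularSpace X]
    (hph : PowerHomogeneous X) (κ : Cardinal.{u}) (hκ : ℵ₀ ≤ κ)
    (h : ∀ F : Set X, IsCompact F → IsClosed F → F.Nonempty → ∃ x : ↥F, piCharPt x ≤ κ) :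
    piChar X ≤ κ :=
  hph.piChar_le_of_dense hκ (dense_setOf_piCharPt_le hκ h)

/-- Lemma 4.2. -/
theorem stmt13 {X : Type u} [TopologicalSpace X] [CompactSpace X] [T2Space X]
    (hph : PowerHomogeneous X) (κ : Cardinal.{u}) (hκ : ℵ₀ ≤ κ)
    (h : ∀ F : Set X, IsClosed F → F.Nonempty → ∃ x : ↥F, piCharPt x ≤ κ) :
    piChar X ≤ κ := by
  exact stmt13_general hph κ hκ fun F _ hF => h F hF
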